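/- arXiv:1703.10846 — 2 statements merged into one kernel-verified Lean document; each statement's English description precedes it below -/
import Mathlib

section
/- Let t and n be positive integers with t ≤ n, and let N denote the number of n×n partial Latin rectangles based on n symbols in which every row contains exactly t entries, every column contains exactly t entries, and there are exactly t symbols each of which occurs exactly n times (all other symbols occurring zero times). Then t^{t·n} · N ≥ (n!)^t · (t!)^n. -/
open Finset

/-- `E` is (the entry set of) an `r × s` partial Latin rectangle based on `n` symbols:
no two distinct triples agree in both their first and second coordinates, in both their
first and third coordinates, or in both their second and third coordinates. -/
def IsPLR {r s n : ℕ} (E : Finset (Fin r × Fin s × Fin n)) : Prop :=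
  ∀ e ∈ E, ∀ e' ∈ E, e ≠ e' →
    ¬(e.1 = e'.1 ∧ e.2.1 = e'.2.1) ∧
    ¬(e.1 = e'.1 ∧ e.2.2 = e'.2.2) ∧
    ¬(e.2.1 = e'.2.1 ∧ e.2.2 = e'.2.2)

/-- The number of entries of `E` in row `i`. -/
def rowType {r s n : ℕ} (E : Finset (Fin r × Fin s × Fin n)) (i : Fin r) : ℕ :=
  (E.filter (fun e => e.1 = i)).card

/-- The number of entries of `E` in column `j`. -/
def colType {r s n : ℕ} (E : Finset (Fin r × Fin s × Fin n)) (j : Fin s) : ℕ :=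
  (E.filter (fun e => e.2.1 = j)).card

/-- The number of occurrences of symbol `k` in `E`. -/
def symType {r s n : ℕ} (E : Finset (Fin r × Fin s × Fin n)) (k : Fin n) : ℕ :=
  (E.filter (fun e => e.2.2 = k)).card

/-!
A `t × n` Latin rectangle is built row by row. The `(k + 1)`-st rows that extend `k` given rows are
counted by the permanent of a 0/1 matrix with all line sums `n - k`, which by van der Waerden's
bound is at least `(n - k) ^ n * n! / n ^ n`. The bound follows from Gurvits' capacity argument:
for a stable homogeneous polynomial in `k + 1` variables, passing to the coefficient of the first
power of one variable costs at most a factor `(k / (k + 1)) ^ k` of the capacity, while the product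
of the row forms of a doubly stochastic matrix has capacity at least `1`.

Exchanging the roles of rows and symbols turns a `t × n` Latin rectangle into a partial Latin
rectangle with `t` symbols, each occurring `n` times. The product of the extension bounds then
gives the theorem, because `n ^ t * t! ≤ t ^ t * (n * (n - 1) * ⋯ * (n - t + 1))`.
-/

section Univariate

open Polynomial ComplexOrder

theorem multiset_prod_le_sum_div_card_pow (s : Multiset ℝ) (hs : ∀ x ∈ s, 0 ≤ x) :
    s.prod ≤ (s.sum / s.card) ^ s.card := by
  rcases eq_or_ne s 0 with rfl | hs0
  · simp
  have hcard : 0 < s.card := Multiset.card_pos.2 hs0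
  have hcount : ∑ x ∈ s.toFinset, (s.count x : ℝ) = s.card := by
    exact_mod_cast Multiset.toFinset_sum_count_eq s
  have hprod : ∏ x ∈ s.toFinset, x ^ (s.count x : ℝ) = s.prod := by
    simp only [Real.rpow_natCast, ← Finset.prod_multiset_count]
  have hsum : ∑ x ∈ s.toFinset, (s.count x : ℝ) * x = s.sum := by
    simp only [← nsmul_eq_mul, ← Finset.sum_multiset_count]
  have amgm := Real.geom_mean_le_arith_mean s.toFinset (fun x => (s.count x : ℝ)) id
    (fun _ _ => Nat.cast_nonneg _) (by rw [hcount]; exact_mod_cast hcard)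
    (fun x hx => hs x (Multiset.mem_toFinset.1 hx))
  simp only [id, hcount, hprod, hsum] at amgm
  have hprod0 : 0 ≤ s.prod := Multiset.prod_nonneg hs
  calc s.prod = (s.prod ^ (s.card : ℝ)⁻¹) ^ s.card :=
        (Real.rpow_inv_natCast_pow hprod0 hcard.ne').symm
    _ ≤ (s.sum / s.card) ^ s.card := by gcongr

variable {K : Type*} [Field K] {f : K[X]}

theorem eval_eq_coeff_zero_mul_prod_of_splits (hf : f.Splits) (h0 : f.coeff 0 ≠ 0) (x : K) :
    f.eval x = f.coeff 0 * (f.roots.map fun r => 1 - x / r).prod := by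
  have hroot : ∀ r ∈ f.roots, x - r = (0 - r) * (1 - x / r) := fun r hr => by
    have : r ≠ 0 := by
      rintro rfl
      exact h0 ((coeff_zero_eq_eval_zero f).trans (isRoot_of_mem_roots hr))
    field_simp
    ring
  rw [coeff_zero_eq_eval_zero, hf.eval_eq_prod_roots x, hf.eval_eq_prod_roots 0,
    Multiset.map_congr rfl hroot, Multiset.prod_map_mul, mul_assoc]

theorem coeff_one_eq_coeff_zero_mul_sum_of_splits (hf : f.Splits) (h0 : f.coeff 0 ≠ 0) :
    f.coeff 1 = f.coeff 0 * (f.roots.map fun r => -r⁻¹).sum := by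
  have hder : f.derivative.eval 0 = f.coeff 1 := by
    rw [← coeff_zero_eq_eval_zero, coeff_derivative]; simp
  rw [coeff_zero_eq_eval_zero] at h0 ⊢
  simpa [hder] using hf.eval_derivative_eq_eval_mul_sum h0

theorem coeff_one_ne_zero_of_roots_re_neg {f : ℂ[X]} (hdeg : 0 < f.natDegree)
    (hroots : ∀ r ∈ f.roots, r.re < 0) : f.coeff 1 ≠ 0 := by
  intro h
  have hder : f.derivative ≠ 0 := fun h0 => hdeg.ne' (derivative_eq_zero.1 h0)
  have hroot : (0 : ℂ) ∈ f.derivative.rootSet ℂ := by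
    rw [mem_rootSet_of_ne hder, coe_aeval_eq_eval, ← coeff_zero_eq_eval_zero, coeff_derivative]
    simp [h]
  have hhalf : convexHull ℝ (f.rootSet ℂ) ⊆ {z : ℂ | z.re < 0} :=
    convexHull_min (fun r hr => hroots r (by simpa [rootSet, aroots] using hr))
      (convex_halfSpace_re_lt 0)
  have h0 : (0 : ℂ).re < 0 := hhalf <|
    rootSet_derivative_subset_convexHull_rootSet (natDegree_pos_iff_degree_pos.1 hdeg) hroot
  exact lt_irrefl 0 h0

theorem neg_inv_eq_ofReal_norm_inv_of_neg {z : ℂ} (hz : z < 0) : -z⁻¹ = ((‖z‖⁻¹ : ℝ) : ℂ) := by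
  have h := Complex.eq_coe_norm_of_nonneg (neg_nonneg.2 hz.le)
  rw [norm_neg] at h
  rw [Complex.ofReal_inv, ← h, inv_neg]

theorem coeff_zero_ne_zero_of_roots_neg {f : ℂ[X]} (hf0 : f ≠ 0)
    (hroots : ∀ r ∈ f.roots, r < 0) : f.coeff 0 ≠ 0 := fun h =>
  lt_irrefl 0 (hroots 0 ((mem_roots hf0).2 ((coeff_zero_eq_eval_zero f).symm.trans h)))

theorem norm_coeff_one_of_roots_neg {f : ℂ[X]} (hf0 : f ≠ 0)
    (hroots : ∀ r ∈ f.roots, r < 0) :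
    ‖f.coeff 1‖ = ‖f.coeff 0‖ * (f.roots.map fun r => ‖r‖⁻¹).sum := by
  have hsum : (f.roots.map fun r => -r⁻¹).sum = ((f.roots.map fun r => ‖r‖⁻¹).sum : ℝ) := by
    rw [Multiset.map_congr rfl fun r hr => neg_inv_eq_ofReal_norm_inv_of_neg (hroots r hr),
      ← Complex.ofRealHom_eq_coe, map_multiset_sum, Multiset.map_map]
    rfl
  rw [coeff_one_eq_coeff_zero_mul_sum_of_splits (IsAlgClosed.splits f)
    (coeff_zero_ne_zero_of_roots_neg hf0 hroots), hsum, norm_mul, Complex.norm_of_nonneg]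
  exact Multiset.sum_nonneg fun x hx => by
    obtain ⟨r, -, rfl⟩ := Multiset.mem_map.1 hx
    positivity

theorem norm_eval_ofReal_of_roots_neg {f : ℂ[X]} (hf0 : f ≠ 0)
    (hroots : ∀ r ∈ f.roots, r < 0) {t : ℝ} (ht : 0 ≤ t) :
    ‖f.eval (t : ℂ)‖ = ‖f.coeff 0‖ * (f.roots.map fun r => 1 + t * ‖r‖⁻¹).prod := by
  have hfactor : ∀ r ∈ f.roots, 1 - (t : ℂ) / r = ((1 + t * ‖r‖⁻¹ : ℝ) : ℂ) := fun r hr => by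
    rw [Complex.ofReal_add, Complex.ofReal_mul,
      ← neg_inv_eq_ofReal_norm_inv_of_neg (hroots r hr), Complex.ofReal_one]
    ring
  have hprod : (f.roots.map fun r => 1 - (t : ℂ) / r).prod =
      ((f.roots.map fun r => 1 + t * ‖r‖⁻¹).prod : ℝ) := by
    rw [Multiset.map_congr rfl hfactor, ← Complex.ofRealHom_eq_coe, map_multiset_prod,
      Multiset.map_map]
    rfl
  rw [eval_eq_coeff_zero_mul_prod_of_splits (IsAlgClosed.splits f)
    (coeff_zero_ne_zero_of_roots_neg hf0 hroots), hprod, norm_mul, Complex.norm_of_nonneg]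
  exact Multiset.prod_nonneg fun x hx => by
    obtain ⟨r, -, rfl⟩ := Multiset.mem_map.1 hx
    positivity

theorem norm_eval_ofReal_le_of_roots_neg {f : ℂ[X]} (hf0 : f ≠ 0)
    (hroots : ∀ r ∈ f.roots, r < 0) {t : ℝ} (ht : 0 ≤ t) :
    ‖f.eval (t : ℂ)‖ ≤
      ‖f.coeff 0‖ * (1 + t * (‖f.coeff 1‖ / ‖f.coeff 0‖) / f.natDegree) ^ f.natDegree := by
  have hcard : f.roots.card = f.natDegree := (IsAlgClosed.splits f).natDegree_eq_card_roots.symm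
  have hsum : (f.roots.map fun r => 1 + t * ‖r‖⁻¹).sum =
      f.natDegree + t * (‖f.coeff 1‖ / ‖f.coeff 0‖) := by
    have h0 : ‖f.coeff 0‖ ≠ 0 := norm_ne_zero_iff.2 (coeff_zero_ne_zero_of_roots_neg hf0 hroots)
    rw [Multiset.sum_map_add, Multiset.sum_map_mul_left,
      norm_coeff_one_of_roots_neg hf0 hroots, mul_div_cancel_left₀ _ h0]
    simp [hcard]
  have hamgm := multiset_prod_le_sum_div_card_pow (f.roots.map fun r => 1 + t * ‖r‖⁻¹)
    fun x hx => by
      obtain ⟨r, -, rfl⟩ := Multiset.mem_map.1 hx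
      positivity
  rw [Multiset.card_map, hcard, hsum] at hamgm
  rw [norm_eval_ofReal_of_roots_neg hf0 hroots ht]
  gcongr
  rcases Nat.eq_zero_or_pos f.natDegree with hd | hd
  · simpa [hd] using hamgm
  · rwa [add_div, div_self (by positivity)] at hamgm

theorem mul_pow_le_norm_coeff_one_of_roots_neg {f : ℂ[X]} {k : ℕ} (hk : k ≠ 0)
    (hdeg : f.natDegree = k + 1) (hroots : ∀ r ∈ f.roots, r < 0) {c : ℝ}
    (hc : ∀ t : ℝ, 0 < t → c * t ≤ ‖f.eval (t : ℂ)‖) :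
    c * (k / (k + 1)) ^ k ≤ ‖f.coeff 1‖ := by
  have hf0 : f ≠ 0 := by rintro rfl; simp at hdeg
  set a := ‖f.coeff 0‖
  set b := ‖f.coeff 1‖
  have ha : 0 < a := norm_pos_iff.2 (coeff_zero_ne_zero_of_roots_neg hf0 hroots)
  have hb : 0 < b := norm_pos_iff.2 <| coeff_one_ne_zero_of_roots_re_neg (by omega)
    fun r hr => (Complex.neg_iff.1 (hroots r hr)).1
  -- This `t` minimises the quotient of the upper bound `a * (1 + t * (b / a) / (k + 1)) ^ (k + 1)`
  -- by `t`.
  set t : ℝ := (k + 1) * a / (k * b) with ht_def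
  have hk' : (0 : ℝ) < k := by positivity
  have ht : 0 < t := by positivity
  have hopt : c * t ≤ a * ((k + 1) / k) ^ (k + 1) := by
    refine ((hc t ht).trans (norm_eval_ofReal_le_of_roots_neg hf0 hroots ht.le)).trans_eq ?_
    have : 1 + t * (b / a) / (k + 1) = (k + 1) / k := by rw [ht_def]; field_simp
    rw [hdeg, Nat.cast_add_one, this]
  calc c * (k / (k + 1)) ^ k = c * t * (k / (k + 1)) ^ (k + 1) * (b / a) := by
        rw [ht_def, pow_succ]; field_simp
    _ ≤ a * ((k + 1) / k) ^ (k + 1) * (k / (k + 1)) ^ (k + 1) * (b / a) := by gcongr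
    _ = b := by
        rw [mul_assoc a, ← mul_pow, div_mul_div_cancel₀ hk'.ne', div_self (by positivity), one_pow]
        field_simp

end Univariate

section Capacity

open MvPolynomial ComplexOrder

theorem eval_smul_of_isHomogeneous {σ R : Type*} [CommSemiring R] {p : MvPolynomial σ R} {d : ℕ}
    (hp : p.IsHomogeneous d) (c : R) (x : σ → R) : eval (c • x) p = c ^ d * eval x p := by
  rw [eval_eq, eval_eq, Finset.mul_sum]
  refine Finset.sum_congr rfl fun m hm => ?_
  have hdeg : ∑ i ∈ m.support, m i = d := (hp.degree_eq_sum_deg_support hm).symm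
  simp only [Pi.smul_apply, smul_eq_mul, mul_pow, Finset.prod_mul_distrib,
    Finset.prod_pow_eq_pow_sum, hdeg]
  ring

/-- Stability of a complex polynomial with respect to the right half-plane, in a strict form: among
the points all of whose coordinates have nonnegative real part, only purely imaginary ones can be
zeros. This form, which allows some coordinates to be `0`, is preserved by Gurvits' induction. -/
def IsStrictlyStable {σ : Type*} (p : MvPolynomial σ ℂ) : Prop :=
  ∀ z : σ → ℂ, (∀ i, 0 ≤ (z i).re) → (∃ i, 0 < (z i).re) → eval z p ≠ 0

/-- Gurvits' capacity, the infimum of `p(x) / ∏ i, x i` over positive vectors `x`. The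
modulus makes sense of it for complex coefficients and bounds the infimum below by `0`. -/
noncomputable def capacity {σ : Type*} [Fintype σ] (p : MvPolynomial σ ℂ) : ℝ :=
  ⨅ x : {x : σ → ℝ // ∀ i, 0 < x i}, ‖eval (fun i => (x.1 i : ℂ)) p‖ / ∏ i, x.1 i

/-- The coefficient of the multilinear monomial `∏ i, X i`, which the capacity bounds from below. -/
noncomputable def mixedCoeff {σ R : Type*} [Finite σ] [CommSemiring R] (p : MvPolynomial σ R) : R :=
  p.coeff (Finsupp.equivFunOnFinite.symm 1)

section

variable {σ : Type*} [Fintype σ] {p : MvPolynomial σ ℂ}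

theorem capacity_mul_prod_le (p : MvPolynomial σ ℂ) {x : σ → ℝ} (hx : ∀ i, 0 < x i) :
    capacity p * ∏ i, x i ≤ ‖eval (fun i => (x i : ℂ)) p‖ := by
  have hbdd : BddBelow (Set.range fun x : {x : σ → ℝ // ∀ i, 0 < x i} =>
      ‖eval (fun i => (x.1 i : ℂ)) p‖ / ∏ i, x.1 i) := by
    refine ⟨0, ?_⟩
    rintro _ ⟨y, rfl⟩
    exact div_nonneg (norm_nonneg _) (Finset.prod_nonneg fun i _ => (y.2 i).le)
  rw [← le_div_iff₀ (Finset.prod_pos fun i _ => hx i)]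
  exact ciInf_le hbdd ⟨x, hx⟩

theorem le_capacity {c : ℝ}
    (h : ∀ x : σ → ℝ, (∀ i, 0 < x i) → c * ∏ i, x i ≤ ‖eval (fun i => (x i : ℂ)) p‖) :
    c ≤ capacity p := by
  have : Nonempty {x : σ → ℝ // ∀ i, 0 < x i} := ⟨⟨1, fun _ => one_pos⟩⟩
  exact le_ciInf fun x => (le_div_iff₀ (Finset.prod_pos fun i _ => x.2 i)).2 (h x.1 x.2)

end

section

variable {R : Type*} [CommSemiring R] {k : ℕ}

theorem mixedCoeff_finSuccEquiv_coeff_one (p : MvPolynomial (Fin (k + 1)) R) :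
    mixedCoeff ((finSuccEquiv R k p).coeff 1) = mixedCoeff p := by
  have hcons : Finsupp.cons 1 (Finsupp.equivFunOnFinite.symm 1 : Fin k →₀ ℕ) =
      Finsupp.equivFunOnFinite.symm 1 := by
    ext i
    cases i using Fin.cases <;> simp
  rw [mixedCoeff, mixedCoeff, finSuccEquiv_coeff_coeff, hcons]

/-- The univariate polynomial `p(X, z 0, …, z (k - 1))`, in the variable that Gurvits' induction
eliminates. -/
noncomputable def slice (p : MvPolynomial (Fin (k + 1)) R) (z : Fin k → R) : Polynomial R :=
  (finSuccEquiv R k p).map (eval z)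

theorem eval_slice (p : MvPolynomial (Fin (k + 1)) R) (z : Fin k → R) (y : R) :
    (slice p z).eval y = eval (Fin.cons y z) p :=
  (eval_eq_eval_mv_eval' z y p).symm

theorem coeff_slice (p : MvPolynomial (Fin (k + 1)) R) (z : Fin k → R) (i : ℕ) :
    (slice p z).coeff i = eval z ((finSuccEquiv R k p).coeff i) :=
  Polynomial.coeff_map _ _

theorem natDegree_slice_le {d : ℕ} {p : MvPolynomial (Fin (k + 1)) R} (hp : p.IsHomogeneous d)
    (z : Fin k → R) : (slice p z).natDegree ≤ d :=
  Polynomial.natDegree_map_le.trans <| (natDegree_finSuccEquiv p).trans_le <|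
    (degreeOf_le_totalDegree p 0).trans hp.totalDegree_le

theorem coeff_slice_eq_eval_cons_one_zero {d : ℕ} {p : MvPolynomial (Fin (k + 1)) R}
    (hp : p.IsHomogeneous d) (z : Fin k → R) :
    (slice p z).coeff d = eval (Fin.cons 1 0) p := by
  have hconst : (slice p z).coeff d = (slice p 0).coeff d := by
    have htop := (totalDegree_zero_iff_isHomogeneous _).2
      (hp.finSuccEquiv_coeff_isHomogeneous d 0 (add_zero d))
    rw [coeff_slice, coeff_slice, totalDegree_eq_zero_iff_eq_C.1 htop, eval_C, eval_C]
  have hlower : ∀ i ∈ Finset.range d, (slice p 0).coeff i = 0 := fun i hi => by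
    have hi : i < d := Finset.mem_range.1 hi
    have hhom := hp.finSuccEquiv_coeff_isHomogeneous i (d - i) (by omega)
    simpa [coeff_slice, Nat.sub_ne_zero_of_lt hi] using
      eval_smul_of_isHomogeneous hhom 0 (0 : Fin k → R)
  rw [hconst, ← eval_slice,
    Polynomial.eval_eq_sum_range' (Nat.lt_succ_of_le (natDegree_slice_le hp 0)),
    Finset.sum_range_succ, Finset.sum_eq_zero fun i hi => by rw [hlower i hi, zero_mul]]
  simp

end

section

variable {k d : ℕ} {p : MvPolynomial (Fin (k + 1)) ℂ}

theorem natDegree_slice (hp : p.IsHomogeneous d) (hstab : IsStrictlyStable p) (z : Fin k → ℂ) :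
    (slice p z).natDegree = d := by
  refine le_antisymm (natDegree_slice_le hp z) (Polynomial.le_natDegree_of_ne_zero ?_)
  rw [coeff_slice_eq_eval_cons_one_zero hp]
  refine hstab _ (fun i => ?_) ⟨0, by simp⟩
  cases i using Fin.cases <;> simp

theorem eval_slice_ne_zero (hstab : IsStrictlyStable p) {z : Fin k → ℂ}
    (hz : ∀ i, 0 ≤ (z i).re) (hz' : ∃ i, 0 < (z i).re) {y : ℂ} (hy : 0 ≤ y.re) :
    (slice p z).eval y ≠ 0 := by
  obtain ⟨j, hj⟩ := hz'
  rw [eval_slice]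
  refine hstab _ (fun i => ?_) ⟨j.succ, by simpa using hj⟩
  cases i using Fin.cases with
  | zero => simpa using hy
  | succ i => simpa using hz i

theorem isStrictlyStable_finSuccEquiv_coeff_one (hp : p.IsHomogeneous d) (hd : 0 < d)
    (hstab : IsStrictlyStable p) : IsStrictlyStable ((finSuccEquiv ℂ k p).coeff 1) := by
  intro z hz hz'
  rw [← coeff_slice]
  refine coeff_one_ne_zero_of_roots_re_neg (by rwa [natDegree_slice hp hstab]) fun r hr => ?_
  by_contra! hre
  exact eval_slice_ne_zero hstab hz hz' hre (Polynomial.isRoot_of_mem_roots hr)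

theorem exists_re_pos_and_mul_re_nonneg {r : ℂ} (hr : ¬r < 0) :
    ∃ a : ℂ, 0 < a.re ∧ 0 ≤ (a * r).re := by
  refine ⟨⟨1, r.re / r.im⟩, one_pos, ?_⟩
  rcases eq_or_ne r.im 0 with him | him
  · simpa [Complex.neg_iff, him] using hr
  · simp [him]

theorem roots_slice_neg [NeZero k] (hp : p.IsHomogeneous d) (hstab : IsStrictlyStable p)
    {x : Fin k → ℝ} (hx : ∀ i, 0 < x i) :
    ∀ r ∈ (slice p fun i => (x i : ℂ)).roots, r < 0 := by
  intro r hr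
  by_contra hneg
  -- By homogeneity a root may be rotated, together with `x`, into the zero-free region.
  obtain ⟨a, ha, har⟩ := exists_re_pos_and_mul_re_nonneg hneg
  have hpos : ∀ i, 0 < (a * x i).re := fun i => by
    simpa using mul_pos ha (hx i)
  have hsmul : (a • Fin.cons r fun i => (x i : ℂ) : Fin (k + 1) → ℂ) =
      Fin.cons (a * r) fun i => a * x i := by
    funext i
    cases i using Fin.cases <;> simp
  have hrot : (slice p fun i => a * x i).eval (a * r) = a ^ d * (slice p fun i => x i).eval r := by
    rw [eval_slice, eval_slice, ← eval_smul_of_isHomogeneous hp, hsmul]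
  refine eval_slice_ne_zero hstab (fun i => (hpos i).le) ⟨0, hpos 0⟩ har ?_
  rw [hrot, Polynomial.isRoot_of_mem_roots hr, mul_zero]

theorem capacity_mul_pow_le_capacity_finSuccEquiv_coeff_one [NeZero k]
    (hp : p.IsHomogeneous (k + 1)) (hstab : IsStrictlyStable p) :
    capacity p * (k / (k + 1)) ^ k ≤ capacity ((finSuccEquiv ℂ k p).coeff 1) := by
  refine le_capacity fun x hx => ?_
  rw [← coeff_slice, mul_right_comm]
  refine mul_pow_le_norm_coeff_one_of_roots_neg (NeZero.ne k) (natDegree_slice hp hstab _)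
    (roots_slice_neg hp hstab hx) fun t ht => ?_
  have hcap := capacity_mul_prod_le p (x := Fin.cons t x) fun i => by
    cases i using Fin.cases with
    | zero => simpa using ht
    | succ i => simpa using hx i
  have hcons : (fun i => ((Fin.cons t x : Fin (k + 1) → ℝ) i : ℂ)) =
      Fin.cons (t : ℂ) fun i => (x i : ℂ) := by
    ext i
    cases i using Fin.cases <;> simp
  rw [eval_slice, ← hcons]
  simpa [Fin.prod_univ_succ, mul_assoc, mul_comm t] using hcap

end

theorem eval_one_of_subsingleton {σ : Type*} [Fintype σ] [Subsingleton σ] {p : MvPolynomial σ ℂ}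
    (hp : p.IsHomogeneous (Fintype.card σ)) : eval 1 p = mixedCoeff p := by
  have hexp : ∀ m ∈ p.support, m = Finsupp.equivFunOnFinite.symm 1 := fun m hm => by
    ext i
    have hdeg : ∑ j, m j = ∑ j : σ, 1 := by
      rw [← Fintype.card_eq_sum_ones, hp.degree_eq_sum_deg_support hm, ← m.degree_eq_sum,
        Finsupp.degree_apply]
    rwa [Fintype.sum_subsingleton _ i, Fintype.sum_subsingleton _ i] at hdeg
  rw [eval_eq', mixedCoeff, Finset.sum_eq_single _ (fun m hm hne => absurd (hexp m hm) hne)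
    fun h => by rw [notMem_support_iff.1 h, zero_mul]]
  simp

theorem capacity_le_norm_mixedCoeff_of_subsingleton {σ : Type*} [Fintype σ] [Subsingleton σ]
    {p : MvPolynomial σ ℂ} (hp : p.IsHomogeneous (Fintype.card σ)) :
    capacity p ≤ ‖mixedCoeff p‖ := by
  rw [← eval_one_of_subsingleton hp]
  simpa [Pi.one_def] using capacity_mul_prod_le p (x := fun _ => 1) fun _ => one_pos

theorem capacity_mul_factorial_div_pow_le_norm_mixedCoeff {k : ℕ} {p : MvPolynomial (Fin k) ℂ}
    (hp : p.IsHomogeneous k) (hstab : IsStrictlyStable p) :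
    capacity p * (k.factorial / k ^ k) ≤ ‖mixedCoeff p‖ := by
  induction k with
  | zero => simpa using capacity_le_norm_mixedCoeff_of_subsingleton (by simpa using hp)
  | succ k ih =>
    rcases Nat.eq_zero_or_pos k with rfl | hk
    · have : Subsingleton (Fin (0 + 1)) := inferInstanceAs (Subsingleton (Fin 1))
      simpa using capacity_le_norm_mixedCoeff_of_subsingleton (by simpa using hp)
    have : NeZero k := ⟨hk.ne'⟩
    have hfactor : ((k + 1).factorial / (k + 1 : ℕ) ^ (k + 1) : ℝ) =
        (k / (k + 1)) ^ k * (k.factorial / k ^ k) := by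
      rw [Nat.factorial_succ, div_pow, pow_succ]
      push_cast
      field_simp
    calc capacity p * ((k + 1).factorial / (k + 1 : ℕ) ^ (k + 1))
        = capacity p * (k / (k + 1)) ^ k * (k.factorial / k ^ k) := by rw [hfactor, mul_assoc]
      _ ≤ capacity ((finSuccEquiv ℂ k p).coeff 1) * (k.factorial / k ^ k) := by
          gcongr
          exact capacity_mul_pow_le_capacity_finSuccEquiv_coeff_one hp hstab
      _ ≤ ‖mixedCoeff ((finSuccEquiv ℂ k p).coeff 1)‖ :=
          ih (hp.finSuccEquiv_coeff_isHomogeneous 1 k (add_comm 1 k))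
            (isStrictlyStable_finSuccEquiv_coeff_one hp k.succ_pos hstab)
      _ = ‖mixedCoeff p‖ := by rw [mixedCoeff_finSuccEquiv_coeff_one]

end Capacity

section Permanent

open Matrix MvPolynomial

theorem sum_single_eq_one_iff_bijective {ι : Type*} [Fintype ι] {f : ι → ι} :
    ∑ i, Finsupp.single (f i) 1 = Finsupp.equivFunOnFinite.symm (1 : ι → ℕ) ↔
      f.Bijective := by
  classical
  have hfibre : ∀ j, (∑ i, Finsupp.single (f i) 1 : ι →₀ ℕ) j = Fintype.card {i // f i = j} := by
    intro j
    simp [Finsupp.finsetSum_apply, Finsupp.single_apply, Fintype.card_subtype]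
  simp only [Finsupp.ext_iff, hfibre, Function.bijective_iff_existsUnique,
    Fintype.existsUnique_iff_card_one, Finsupp.equivFunOnFinite_symm_apply_apply, Pi.one_apply,
    Fintype.card_subtype]

variable {κ ι R : Type*} [Fintype κ] [Fintype ι] [CommSemiring R]

/-- The product `∏ i, ∑ j, A i j * X j` of the linear forms given by the rows of a matrix `A`; for
square `A` its mixed coefficient is the permanent of `A`. -/
noncomputable def prodRowForms (A : Matrix κ ι R) : MvPolynomial ι R :=
  ∏ i, A.toMvPolynomial i

theorem eval_prodRowForms (A : Matrix κ ι R) (x : ι → R) :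
    eval x (prodRowForms A) = ∏ i, (A *ᵥ x) i := by
  simp only [prodRowForms, eval_prod, toMvPolynomial_eval_eq_apply]

theorem isHomogeneous_prodRowForms (A : Matrix κ ι R) :
    (prodRowForms A).IsHomogeneous (Fintype.card κ) := by
  simpa [prodRowForms] using IsHomogeneous.prod Finset.univ _ (fun _ => 1) fun i _ =>
    A.toMvPolynomial_isHomogeneous i

variable [DecidableEq ι]

theorem mixedCoeff_prodRowForms (A : Matrix ι ι R) :
    mixedCoeff (prodRowForms A) = A.permanent := by
  have hmonomial : ∀ f : ι → ι, ∏ i, monomial (Finsupp.single (f i) 1) (A i (f i)) =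
      monomial (∑ i, Finsupp.single (f i) 1) (∏ i, A i (f i)) := fun f => by
    simp only [monomial_sum_index, map_prod, ← Finset.prod_mul_distrib, C_mul_monomial, mul_one]
  simp only [prodRowForms, toMvPolynomial, Finset.prod_univ_sum, Fintype.piFinset_univ, mixedCoeff,
    coeff_sum, hmonomial, coeff_monomial, sum_single_eq_one_iff_bijective]
  rw [← permanent_transpose, permanent]
  symm
  refine Fintype.sum_of_injective _ (DFunLike.coe_injective (F := Equiv.Perm ι)) _ _
    (fun f hf => if_neg fun hbij => hf ⟨Equiv.ofBijective f hbij, rfl⟩) fun σ => ?_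
  simp

theorem permanent_map {S : Type*} [CommSemiring S] (f : R →+* S) (A : Matrix ι ι R) :
    (A.map f).permanent = f A.permanent := by
  simp [permanent]

theorem permanent_submatrix_equiv_self [DecidableEq κ] (e : κ ≃ ι) (A : Matrix ι ι R) :
    (A.submatrix e e).permanent = A.permanent := by
  refine Fintype.sum_equiv e.permCongr _ _ fun σ => Fintype.prod_equiv e _ _ fun i => ?_
  rw [Equiv.permCongr_apply, Equiv.symm_apply_apply, submatrix_apply]

theorem permanent_nonneg [PartialOrder R] [IsOrderedRing R] {A : Matrix ι ι R}
    (hA : ∀ i j, 0 ≤ A i j) : 0 ≤ A.permanent :=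
  Finset.sum_nonneg fun _ _ => Finset.prod_nonneg fun _ _ => hA _ _

theorem continuous_permanent [TopologicalSpace R] [IsTopologicalSemiring R] :
    Continuous fun A : Matrix ι ι R => A.permanent := by
  simp only [permanent]
  fun_prop

end Permanent

section VanDerWaerden

open Matrix MvPolynomial

variable {κ ι : Type*} [Fintype κ] [Fintype ι]

theorem isStrictlyStable_prodRowForms {A : Matrix κ ι ℝ} (hA : ∀ i j, 0 < A i j) :
    IsStrictlyStable (prodRowForms (A.map Complex.ofRealHom)) := by
  intro z hz ⟨j, hj⟩
  rw [eval_prodRowForms, Finset.prod_ne_zero_iff]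
  intro i _ hzero
  have hre : 0 < ∑ j, A i j * (z j).re :=
    Finset.sum_pos' (fun k _ => mul_nonneg (hA i k).le (hz k))
      ⟨j, Finset.mem_univ j, mul_pos (hA i j) hj⟩
  refine hre.ne' ?_
  simpa [mulVec, dotProduct] using congrArg Complex.re hzero

variable [DecidableEq ι]

theorem prod_le_prod_mulVec_of_mem_doublyStochastic {A : Matrix ι ι ℝ}
    (hA : A ∈ doublyStochastic ℝ ι) {x : ι → ℝ} (hx : ∀ i, 0 < x i) :
    ∏ i, x i ≤ ∏ i, (A *ᵥ x) i := by
  have hamgm : ∀ i, ∏ j, x j ^ A i j ≤ (A *ᵥ x) i := fun i =>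
    Real.geom_mean_le_arith_mean_weighted Finset.univ (A i) x
      (fun j _ => nonneg_of_mem_doublyStochastic hA) (sum_row_of_mem_doublyStochastic hA i)
      fun j _ => (hx j).le
  calc ∏ j, x j = ∏ j, ∏ i, x j ^ A i j := by
        simp only [← Real.rpow_sum_of_pos (hx _), sum_col_of_mem_doublyStochastic hA, Real.rpow_one]
    _ = ∏ i, ∏ j, x j ^ A i j := Finset.prod_comm
    _ ≤ ∏ i, (A *ᵥ x) i := Finset.prod_le_prod
        (fun i _ => Finset.prod_nonneg fun j _ => Real.rpow_nonneg (hx j).le _) fun i _ => hamgm i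

theorem one_le_capacity_prodRowForms {A : Matrix ι ι ℝ} (hA : A ∈ doublyStochastic ℝ ι) :
    1 ≤ capacity (prodRowForms (A.map Complex.ofRealHom)) := by
  refine le_capacity fun x hx => ?_
  have heval : eval (fun i => (x i : ℂ)) (prodRowForms (A.map Complex.ofRealHom)) =
      (∏ i, (A *ᵥ x) i : ℝ) := by
    simp [eval_prodRowForms, mulVec, dotProduct]
  rw [one_mul, heval, Complex.norm_real]
  exact (prod_le_prod_mulVec_of_mem_doublyStochastic hA hx).trans (Real.le_norm_self _)

theorem factorial_div_pow_le_permanent_of_pos {A : Matrix ι ι ℝ}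
    (hA : A ∈ doublyStochastic ℝ ι) (hpos : ∀ i j, 0 < A i j) :
    ((Fintype.card ι).factorial / Fintype.card ι ^ Fintype.card ι : ℝ) ≤ A.permanent := by
  set e := (Fintype.equivFin ι).symm
  set k := Fintype.card ι
  set B : Matrix (Fin k) (Fin k) ℝ := A.submatrix e e
  have hBmem : B ∈ doublyStochastic ℝ (Fin k) :=
    reindex_mem_doublyStochastic (e₁ := e.symm) (e₂ := e.symm) hA
  have h := capacity_mul_factorial_div_pow_le_norm_mixedCoeff
    (p := prodRowForms (B.map Complex.ofRealHom))
    (by simpa using isHomogeneous_prodRowForms (B.map Complex.ofRealHom))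
    (isStrictlyStable_prodRowForms fun i j => hpos _ _)
  rw [mixedCoeff_prodRowForms, permanent_map, Complex.ofRealHom_eq_coe, Complex.norm_real,
    permanent_submatrix_equiv_self,
    Real.norm_of_nonneg (permanent_nonneg fun i j => (hpos i j).le)] at h
  exact (le_mul_of_one_le_left (by positivity) (one_le_capacity_prodRowForms hBmem)).trans h

theorem uniform_mem_doublyStochastic [Nonempty ι] :
    (of fun _ _ => (Fintype.card ι : ℝ)⁻¹ : Matrix ι ι ℝ) ∈ doublyStochastic ℝ ι := by
  simp [mem_doublyStochastic_iff_sum]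

theorem factorial_div_pow_le_permanent {A : Matrix ι ι ℝ} (hA : A ∈ doublyStochastic ℝ ι) :
    ((Fintype.card ι).factorial / Fintype.card ι ^ Fintype.card ι : ℝ) ≤ A.permanent := by
  cases isEmpty_or_nonempty ι
  · simp [permanent_isEmpty]
  set J : Matrix ι ι ℝ := of fun _ _ => (Fintype.card ι : ℝ)⁻¹
  have hcont : Continuous fun e : ℝ => ((1 - e) • A + e • J).permanent :=
    continuous_permanent.comp (by fun_prop)
  have hlim : Filter.Tendsto (fun e : ℝ => ((1 - e) • A + e • J).permanent)
      (nhdsWithin 0 (Set.Ioi 0)) (nhds A.permanent) := by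
    simpa using (hcont.tendsto 0).mono_left nhdsWithin_le_nhds
  refine ge_of_tendsto hlim ?_
  filter_upwards [Ioo_mem_nhdsGT one_pos] with e ⟨he0, he1⟩
  refine factorial_div_pow_le_permanent_of_pos (convex_doublyStochastic hA
    uniform_mem_doublyStochastic (sub_nonneg.2 he1.le) he0.le (sub_add_cancel 1 e)) fun i j => ?_
  exact add_pos_of_nonneg_of_pos
    (mul_nonneg (sub_nonneg.2 he1.le) (nonneg_of_mem_doublyStochastic hA))
    (mul_pos he0 (inv_pos.2 (Nat.cast_pos.2 Fintype.card_pos)))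

theorem pow_mul_factorial_div_pow_le_permanent {A : Matrix ι ι ℝ} (hA : ∀ i j, 0 ≤ A i j)
    {s : ℝ} (hs : 0 ≤ s) (hrow : ∀ i, ∑ j, A i j = s) (hcol : ∀ j, ∑ i, A i j = s) :
    s ^ Fintype.card ι * ((Fintype.card ι).factorial / Fintype.card ι ^ Fintype.card ι) ≤
      A.permanent := by
  obtain ⟨B, hB, rfl⟩ := (exists_mem_doublyStochastic_eq_smul_iff hs).2 ⟨hA, hrow, hcol⟩
  rw [permanent_smul]
  gcongr
  exact factorial_div_pow_le_permanent hB

end VanDerWaerden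

section LatinRectangle

open Equiv

theorem permanent_of_boole {α R : Type*} [Fintype α] [DecidableEq α] [CommSemiring R]
    (r : α → α → Prop) [DecidableRel r] :
    (Matrix.of fun y x => if r x y then 1 else 0 : Matrix α α R).permanent =
      Nat.card {σ : Perm α // ∀ x, r x (σ x)} := by
  simp [Matrix.permanent, Finset.prod_boole, Fintype.card_subtype]

theorem pow_mul_factorial_le_pow_mul_card_perm {α : Type*} [Fintype α] {r : α → α → Prop}
    [DecidableRel r] {d : ℕ} (hrow : ∀ x, #{y | r x y} = d) (hcol : ∀ y, #{x | r x y} = d) :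
    d ^ Fintype.card α * (Fintype.card α).factorial ≤
      Fintype.card α ^ Fintype.card α * Nat.card {σ : Perm α // ∀ x, r x (σ x)} := by
  classical
  have hperm := pow_mul_factorial_div_pow_le_permanent (s := d)
    (A := Matrix.of fun y x => if r x y then 1 else 0)
    (fun y x => by simp only [Matrix.of_apply]; split_ifs <;> simp) d.cast_nonneg
    (fun y => by simp [hcol y]) (fun x => by simp [hrow x])
  have hpos : (0 : ℝ) < (Fintype.card α : ℝ) ^ Fintype.card α := by
    exact_mod_cast Nat.pow_self_pos
  rw [permanent_of_boole, ← mul_div_assoc, div_le_iff₀' hpos] at hperm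
  exact_mod_cast hperm

theorem card_filter_forall_ne {κ α : Type*} [Fintype κ] [Fintype α] [DecidableEq α]
    {g : κ → α} (hg : g.Injective) :
    #{y | ∀ a, g a ≠ y} = Fintype.card α - Fintype.card κ := by
  have hcompl : ({y | ∀ a, g a ≠ y} : Finset α) = (univ.image g)ᶜ := by
    ext y
    simp
  rw [hcompl, card_compl, card_image_of_injective _ hg, card_univ]

/-- Latin rectangles, encoded by their rows: permutations of the set of symbols (which is also the
set of columns), no two of which agree at any column. -/
def IsLatinRectangle {κ α : Type*} (f : κ → Perm α) : Prop :=
  Pairwise fun a b => ∀ x, f a x ≠ f b x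

namespace IsLatinRectangle

theorem injective_apply {κ α : Type*} {f : κ → Perm α} (hf : IsLatinRectangle f) (x : α) :
    Function.Injective fun a => f a x := fun a b hab => by
  by_contra hne
  exact hf hne x hab

theorem injective_symm_apply {κ α : Type*} {f : κ → Perm α} (hf : IsLatinRectangle f) (y : α) :
    Function.Injective fun a => (f a).symm y := fun a b hab =>
  hf.injective_apply ((f a).symm y) <| by
    simp only at hab ⊢
    rw [Equiv.apply_symm_apply, hab, Equiv.apply_symm_apply]

theorem pow_mul_factorial_le {κ α : Type*} [Fintype κ] [Fintype α] {f : κ → Perm α}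
    (hf : IsLatinRectangle f) :
    (Fintype.card α - Fintype.card κ) ^ Fintype.card α * (Fintype.card α).factorial ≤
      Fintype.card α ^ Fintype.card α * Nat.card {σ : Perm α // ∀ x a, f a x ≠ σ x} := by
  classical
  refine pow_mul_factorial_le_pow_mul_card_perm (r := fun x y => ∀ a, f a x ≠ y)
    (fun x => card_filter_forall_ne (hf.injective_apply x)) fun y => ?_
  have hsymm : ∀ a x, f a x ≠ y ↔ (f a).symm y ≠ x := fun a x => by
    rw [Ne, Ne, Equiv.symm_apply_eq, eq_comm]
  simpa only [hsymm] using card_filter_forall_ne (hf.injective_symm_apply y)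

theorem cons {α : Type*} {k : ℕ} {f : Fin k → Perm α} (hf : IsLatinRectangle f)
    {σ : Perm α} (hσ : ∀ x a, f a x ≠ σ x) :
    IsLatinRectangle (Fin.cons σ f : Fin (k + 1) → Perm α) := by
  intro a b hab x
  cases a using Fin.cases with
  | zero =>
    cases b using Fin.cases with
    | zero => exact absurd rfl hab
    | succ b => simpa using (hσ x b).symm
  | succ a =>
    cases b using Fin.cases with
    | zero => simpa using hσ x a
    | succ b => simpa using hf (fun h => hab (congrArg Fin.succ h)) x

end IsLatinRectangle

/-- The number of Latin rectangles with rows indexed by `Fin k` and symbol set `α`. -/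
noncomputable def numLatinRectangles (k : ℕ) (α : Type*) : ℕ :=
  Nat.card {f : Fin k → Perm α // IsLatinRectangle f}

theorem sum_card_extensions_le_numLatinRectangles_succ (k : ℕ) (α : Type*) [Finite α]
    [Fintype {f : Fin k → Perm α // IsLatinRectangle f}] :
    ∑ f : {f : Fin k → Perm α // IsLatinRectangle f},
        Nat.card {σ : Perm α // ∀ x a, f.1 a x ≠ σ x} ≤
      numLatinRectangles (k + 1) α := by
  rw [numLatinRectangles, ← Nat.card_sigma]
  refine Nat.card_le_card_of_injective (fun e => ⟨Fin.cons e.2.1 e.1.1, e.1.2.cons e.2.2⟩) ?_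
  rintro ⟨⟨f, hf⟩, ⟨σ, hσ⟩⟩ ⟨⟨g, hg⟩, ⟨τ, hτ⟩⟩ h
  obtain ⟨rfl, rfl⟩ := Fin.cons_inj (α := fun _ => Perm α).1 (congrArg Subtype.val h)
  rfl

theorem pow_mul_factorial_mul_numLatinRectangles_le (α : Type*) [Fintype α] (k : ℕ) :
    (Fintype.card α - k) ^ Fintype.card α * (Fintype.card α).factorial * numLatinRectangles k α ≤
      Fintype.card α ^ Fintype.card α * numLatinRectangles (k + 1) α := by
  have := Fintype.ofFinite {f : Fin k → Perm α // IsLatinRectangle f}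
  calc _ = ∑ _f : {f : Fin k → Perm α // IsLatinRectangle f},
          (Fintype.card α - k) ^ Fintype.card α * (Fintype.card α).factorial := by
        simp [numLatinRectangles, mul_comm]
    _ ≤ ∑ f : {f : Fin k → Perm α // IsLatinRectangle f},
          Fintype.card α ^ Fintype.card α * Nat.card {σ : Perm α // ∀ x a, f.1 a x ≠ σ x} :=
        sum_le_sum fun f _ => by simpa using f.2.pow_mul_factorial_le
    _ ≤ _ := by
        rw [← mul_sum]
        exact Nat.mul_le_mul_left _ (sum_card_extensions_le_numLatinRectangles_succ k α)

theorem factorial_pow_mul_descFactorial_pow_le (α : Type*) [Fintype α] (k : ℕ) :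
    (Fintype.card α).factorial ^ k * (Fintype.card α).descFactorial k ^ Fintype.card α ≤
      Fintype.card α ^ (Fintype.card α * k) * numLatinRectangles k α := by
  set n := Fintype.card α
  induction k with
  | zero =>
    have : Nonempty {f : Fin 0 → Perm α // IsLatinRectangle f} := ⟨⟨Fin.elim0, fun a => a.elim0⟩⟩
    have : 0 < numLatinRectangles 0 α := Nat.card_pos
    simpa
  | succ k ih =>
    calc n.factorial ^ (k + 1) * n.descFactorial (k + 1) ^ n
        = (n - k) ^ n * n.factorial * (n.factorial ^ k * n.descFactorial k ^ n) := by
          rw [Nat.descFactorial_succ, mul_pow]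
          ring
      _ ≤ (n - k) ^ n * n.factorial *
            (n ^ (n * k) * numLatinRectangles k α) := by gcongr
      _ = n ^ (n * k) * ((n - k) ^ n * n.factorial * numLatinRectangles k α) := by ring
      _ ≤ n ^ (n * k) * (n ^ n * numLatinRectangles (k + 1) α) :=
          Nat.mul_le_mul_left _ (pow_mul_factorial_mul_numLatinRectangles_le α k)
      _ = n ^ (n * (k + 1)) * numLatinRectangles (k + 1) α := by ring

end LatinRectangle

theorem pow_mul_descFactorial_le {t n : ℕ} (htn : t ≤ n) (s : ℕ) :
    n ^ s * t.descFactorial s ≤ t ^ s * n.descFactorial s := by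
  induction s with
  | zero => simp
  | succ s ih =>
    have hfactor : n * (t - s) ≤ t * (n - s) := by
      rw [Nat.mul_sub, Nat.mul_sub, mul_comm n t]
      exact Nat.sub_le_sub_left (Nat.mul_le_mul_right s htn) _
    calc n ^ (s + 1) * t.descFactorial (s + 1)
        = (n * (t - s)) * (n ^ s * t.descFactorial s) := by rw [Nat.descFactorial_succ]; ring
      _ ≤ (t * (n - s)) * (t ^ s * n.descFactorial s) := Nat.mul_le_mul hfactor ih
      _ = t ^ (s + 1) * n.descFactorial (s + 1) := by rw [Nat.descFactorial_succ]; ring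

section Regular

variable {n : ℕ}

/-- The `n × n` partial Latin rectangles with `t` entries in each row and in each column whose
entries carry `t` symbols, each of them `n` times. -/
def IsRegularPLR (t : ℕ) (E : Finset (Fin n × Fin n × Fin n)) : Prop :=
  IsPLR E ∧ (∀ i, rowType E i = t) ∧ (∀ j, colType E j = t) ∧
    #{k | symType E k = n} = t ∧ ∀ k, symType E k = n ∨ symType E k = 0

variable {κ : Type*} [Fintype κ] {f : κ → Equiv.Perm (Fin n)} {e : κ → Fin n}

/-- The transposition of a Latin rectangle `f`, with rows indexed by `κ`, that exchanges the roles
of rows and symbols: the cells `(i, f a i)` are filled with the symbol `e a`. -/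
def plrOf (f : κ → Equiv.Perm (Fin n)) (e : κ → Fin n) : Finset (Fin n × Fin n × Fin n) :=
  univ.image fun q : κ × Fin n => (q.2, f q.1 q.2, e q.1)

theorem mem_plrOf {i j k : Fin n} : (i, j, k) ∈ plrOf f e ↔ ∃ a, f a i = j ∧ e a = k := by
  simp [plrOf]

theorem card_filter_plrOf (he : e.Injective) (p : Fin n × Fin n × Fin n → Prop) [DecidablePred p] :
    #{x ∈ plrOf f e | p x} = #{q : κ × Fin n | p (q.2, f q.1 q.2, e q.1)} := by
  rw [plrOf, filter_image, card_image_of_injective]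
  rintro ⟨a, i⟩ ⟨b, j⟩ h
  simp only [Prod.mk.injEq] at h ⊢
  exact ⟨he h.2.2, h.1⟩

theorem card_filter_snd_eq {ι : Type*} [Fintype ι] [DecidableEq ι] (g : κ → ι) :
    #{q : κ × ι | q.2 = g q.1} = Fintype.card κ := by
  classical
  have himage : ({q | q.2 = g q.1} : Finset (κ × ι)) = univ.image fun a => (a, g a) := by
    ext ⟨a, i⟩
    simp [eq_comm]
  rw [himage, card_image_of_injective _ fun a b h => congrArg Prod.fst h, card_univ]

theorem rowType_plrOf (he : e.Injective) (i : Fin n) : rowType (plrOf f e) i = Fintype.card κ :=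
  (card_filter_plrOf he _).trans (card_filter_snd_eq fun _ => i)

theorem colType_plrOf (he : e.Injective) (j : Fin n) : colType (plrOf f e) j = Fintype.card κ := by
  rw [colType, card_filter_plrOf he]
  simpa only [Equiv.eq_symm_apply] using card_filter_snd_eq fun a => (f a).symm j

theorem symType_plrOf_apply (he : e.Injective) (a : κ) : symType (plrOf f e) (e a) = n := by
  have hfst : ({q | e q.1 = e a} : Finset (κ × Fin n)) = {a} ×ˢ univ := by
    ext ⟨b, i⟩
    simp [he.eq_iff, eq_comm]
  rw [symType, card_filter_plrOf he, hfst]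
  simp

theorem symType_plrOf_of_notMem_range {k : Fin n} (hk : k ∉ Set.range e) :
    symType (plrOf f e) k = 0 := by
  rw [symType, card_eq_zero, filter_eq_empty_iff]
  rintro ⟨i, j, l⟩ hx rfl
  obtain ⟨a, -, ha⟩ := mem_plrOf.1 hx
  exact hk ⟨a, ha⟩

theorem isPLR_plrOf (hf : IsLatinRectangle f) (he : e.Injective) : IsPLR (plrOf f e) := by
  rintro ⟨i, j, k⟩ hx ⟨i', j', k'⟩ hx' hne
  obtain ⟨a, rfl, rfl⟩ := mem_plrOf.1 hx
  obtain ⟨b, rfl, rfl⟩ := mem_plrOf.1 hx'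
  refine ⟨?_, ?_, ?_⟩
  · rintro ⟨rfl : i = i', hab⟩
    obtain rfl := hf.injective_apply i hab
    exact hne rfl
  · rintro ⟨rfl : i = i', hab⟩
    obtain rfl := he hab
    exact hne rfl
  · rintro ⟨hi, hab⟩
    obtain rfl := he hab
    obtain rfl := (f a).injective hi
    exact hne rfl

theorem isRegularPLR_plrOf [NeZero n] (hf : IsLatinRectangle f) (he : e.Injective) :
    IsRegularPLR (Fintype.card κ) (plrOf f e) := by
  have hsymbols : ({k | symType (plrOf f e) k = n} : Finset (Fin n)) = univ.image e := by
    ext k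
    by_cases hk : k ∈ Set.range e
    · obtain ⟨a, rfl⟩ := hk
      simp [symType_plrOf_apply he]
    · simpa [symType_plrOf_of_notMem_range hk, (NeZero.ne n).symm] using hk
  refine ⟨isPLR_plrOf hf he, rowType_plrOf he, colType_plrOf he, ?_, fun k => ?_⟩
  · rw [hsymbols, card_image_of_injective _ he, card_univ]
  · by_cases hk : k ∈ Set.range e
    · obtain ⟨a, rfl⟩ := hk
      exact Or.inl (symType_plrOf_apply he a)
    · exact Or.inr (symType_plrOf_of_notMem_range hk)

theorem plrOf_left_injective (he : e.Injective) :
    Function.Injective fun f : κ → Equiv.Perm (Fin n) => plrOf f e := by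
  intro f g (hfg : plrOf f e = plrOf g e)
  ext a i : 2
  have hmem : (i, f a i, e a) ∈ plrOf g e := hfg ▸ mem_plrOf.2 ⟨a, rfl, rfl⟩
  obtain ⟨b, hb, hab⟩ := mem_plrOf.1 hmem
  rw [← hb, he hab]

theorem numLatinRectangles_le_card_isRegularPLR [NeZero n] {t : ℕ} (htn : t ≤ n) :
    numLatinRectangles t (Fin n) ≤
      Nat.card {E : Finset (Fin n × Fin n × Fin n) // IsRegularPLR t E} := by
  have he := Fin.castLE_injective htn
  refine Nat.card_le_card_of_injective
    (fun f => ⟨plrOf f.1 (Fin.castLE htn), by simpa using isRegularPLR_plrOf f.2 he⟩) ?_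
  exact fun f g hfg => Subtype.ext (plrOf_left_injective he (congrArg Subtype.val hfg))

end Regular

theorem stmt3 (t n : ℕ) (ht : 0 < t) (hn : 0 < n) (htn : t ≤ n) :
    (n.factorial) ^ t * (t.factorial) ^ n ≤
      t ^ (t * n) *
        Nat.card {E : Finset (Fin n × Fin n × Fin n) //
          IsPLR E ∧ (∀ i, rowType E i = t) ∧ (∀ j, colType E j = t) ∧
          (Finset.univ.filter (fun k => symType E k = n)).card = t ∧
          (∀ k, symType E k = n ∨ symType E k = 0)} := by
  have : NeZero n := ⟨hn.ne'⟩
  have hfact : n ^ t * t.factorial ≤ t ^ t * n.descFactorial t := by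
    simpa only [Nat.descFactorial_self] using pow_mul_descFactorial_le htn t
  have hrect : n.factorial ^ t * n.descFactorial t ^ n ≤
      n ^ (n * t) * numLatinRectangles t (Fin n) := by
    simpa using factorial_pow_mul_descFactorial_pow_le (Fin n) t
  refine le_trans ?_ (Nat.mul_le_mul_left _ (numLatinRectangles_le_card_isRegularPLR htn))
  refine Nat.le_of_mul_le_mul_left ?_ (pow_pos hn (n * t))
  calc n ^ (n * t) * (n.factorial ^ t * t.factorial ^ n)
      = n.factorial ^ t * (n ^ t * t.factorial) ^ n := by ring
    _ ≤ n.factorial ^ t * (t ^ t * n.descFactorial t) ^ n := by gcongr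
    _ = t ^ (t * n) * (n.factorial ^ t * n.descFactorial t ^ n) := by ring
    _ ≤ t ^ (t * n) * (n ^ (n * t) * numLatinRectangles t (Fin n)) := by gcongr
    _ = n ^ (n * t) * (t ^ (t * n) * numLatinRectangles t (Fin n)) := by ring
end

section
/- For all positive integers r, s, n, the number of r×s partial Latin rectangles based on n symbols of size 5 satisfies 120·|R_{r,s,n:5}| = rsn·(σ(4,4,4) − 10σ(4,3,3) + 20σ(3,3,3) + 35σ(4,2,2) + 90σ(3,3,2) − 180σ(3,2,2) − 50σ(4,1,1) − 260σ(3,2,1) − 460σ(2,2,2) + 520σ(3,1,1) + 1350σ(2,2,1) + 24σ(4,0,0) + 240σ(3,1,0) + 480σ(2,2,0) − 320σ(2,1,1) − 480σ(3,0,0) − 2520σ(2,1,0) − 5090σ(1,1,1) + 2880σ(2,0,0) + 7440σ(1,1,0) − 6360σ(1,0,0) + 4512). -/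
open Finset

/-- The number of `r × s` partial Latin rectangles based on `n` symbols of size `m`. -/
noncomputable def numPLR (r s n m : ℕ) : ℕ :=
  Nat.card {E : Finset (Fin r × Fin s × Fin n) // IsPLR E ∧ E.card = m}

/-- `sig r s n a b c` is the sum of the distinct monomials `r^a' * s^b' * n^c'` as
`(a',b',c')` ranges over the distinct permutations of `(a,b,c)`. -/
def sig (r s n : ℤ) (a b c : ℕ) : ℤ :=
  ∑ p ∈ ({(a, b, c), (a, c, b), (b, a, c), (b, c, a), (c, a, b), (c, b, a)} :
      Finset (ℕ × ℕ × ℕ)),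
    r ^ p.1 * s ^ p.2.1 * n ^ p.2.2

/-! Listing the entries of a partial Latin rectangle of size `m` in some order gives three functions
on `Fin m` (rows, columns, symbols), and the defining conditions say exactly that the kernels of
these functions meet pairwise trivially in the lattice of set partitions of `Fin m`. A partition
with `a` blocks is the kernel of `r (r - 1) ⋯ (r - a + 1)` functions into an `r`-element set, so
`m!` times the number of rectangles is a sum of products of three falling factorials, weighted by
the number of triples of pairwise disjoint partitions with prescribed numbers of blocks. For `m = 5`
these weights are found by enumerating the 52 partitions of a five-element set. -/

open Function Setoid
open scoped Nat

section SetPartitions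

variable {ι α β γ : Type*}

instance [Finite ι] : Finite (Setoid ι) :=
  Finite.of_injective (fun P : Setoid ι => ⇑P) fun _ _ => Setoid.eq_iff_rel_eq.2

noncomputable instance [Finite ι] : Fintype (Setoid ι) := Fintype.ofFinite _

/-- The number of blocks of a set partition, encoded as an equivalence relation. -/
noncomputable def numBlocks (P : Setoid ι) : ℕ := Nat.card (Quotient P)

theorem numBlocks_le_card [Fintype ι] (P : Setoid ι) : numBlocks P ≤ Fintype.card ι := by
  rw [← Nat.card_eq_fintype_card]
  exact Nat.card_le_card_of_surjective _ Quotient.mk_surjective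

theorem numBlocks_ker [Fintype ι] [DecidableEq α] (f : ι → α) :
    numBlocks (ker f) = #(univ.image f) := by
  rw [numBlocks, Nat.card_congr (quotientKerEquivRange f), Nat.card_coe_set_eq,
    ← Set.ncard_coe_finset, coe_image, coe_univ, Set.image_univ]

theorem disjoint_ker_iff {f : ι → α} {g : ι → β} :
    Disjoint (ker f) (ker g) ↔ ∀ i j, f i = f j → g i = g j → i = j := by
  simp only [disjoint_iff_inf_le, Setoid.le_def, Setoid.inf_iff_and, ker_def, and_imp]

/-- Functions into `α` with kernel `P` correspond to injections of the set of blocks of `P`. -/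
def quotientEmbeddingEquivKerEq (P : Setoid ι) : (Quotient P ↪ α) ≃ {f : ι → α // ker f = P} where
  toFun g := ⟨fun i => g ⟦i⟧, Setoid.ext fun i j => by
    rw [ker_def, g.injective.eq_iff, Quotient.eq]⟩
  invFun f := ⟨Quotient.lift f.1 fun _ _ h => ker_def.1 (f.2.symm ▸ h), by
    rintro ⟨i⟩ ⟨j⟩ h
    exact Quotient.sound (f.2 ▸ ker_def.2 h)⟩
  left_inv g := by
    ext ⟨i⟩
    rfl
  right_inv _ := rfl

open Classical in
theorem card_filter_ker_eq [Fintype ι] [DecidableEq ι] [Fintype α] (P : Setoid ι) :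
    #{f : ι → α | ker f = P} = (Fintype.card α).descFactorial (numBlocks P) := by
  rw [← Fintype.card_subtype, ← Fintype.card_congr (quotientEmbeddingEquivKerEq P),
    Fintype.card_embedding_eq, numBlocks, Nat.card_eq_fintype_card]

/-- Three set partitions are mutually disjoint if no two distinct points lie in a common block of
two of them. -/
def MutuallyDisjoint (P Q R : Setoid ι) : Prop := Disjoint P Q ∧ Disjoint P R ∧ Disjoint Q R

open Classical in
theorem card_filter_mutuallyDisjoint_ker [Fintype ι] [DecidableEq ι] [Fintype α] [Fintype β]
    [Fintype γ] :
    #{p : (ι → α) × (ι → β) × (ι → γ) | MutuallyDisjoint (ker p.1) (ker p.2.1) (ker p.2.2)} =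
      ∑ t : Setoid ι × Setoid ι × Setoid ι with MutuallyDisjoint t.1 t.2.1 t.2.2,
        (Fintype.card α).descFactorial (numBlocks t.1) *
          ((Fintype.card β).descFactorial (numBlocks t.2.1) *
            (Fintype.card γ).descFactorial (numBlocks t.2.2)) := by
  rw [card_eq_sum_card_fiberwise (f := Prod.map ker (Prod.map ker ker))
    (t := {t | MutuallyDisjoint t.1 t.2.1 t.2.2}) fun p hp => by simpa using hp]
  refine sum_congr rfl fun ⟨P, Q, R⟩ ht => ?_
  have fiber_eq_product :
      ({p ∈ {p : (ι → α) × (ι → β) × (ι → γ) |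
          MutuallyDisjoint (ker p.1) (ker p.2.1) (ker p.2.2)} |
        Prod.map ker (Prod.map ker ker) p = (P, Q, R)} : Finset _) =
      ({f | ker f = P} : Finset (ι → α)) ×ˢ
        ({g | ker g = Q} : Finset (ι → β)) ×ˢ ({h | ker h = R} : Finset (ι → γ)) := by
    ext ⟨f, g, h⟩
    simp only [mem_filter, mem_univ, true_and, mem_product, Prod.map_apply, Prod.mk.injEq,
      and_iff_right_iff_imp]
    rintro ⟨rfl, rfl, rfl⟩
    exact (mem_filter.1 ht).2
  rw [fiber_eq_product, card_product, card_product, card_filter_ker_eq, card_filter_ker_eq,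
    card_filter_ker_eq]

open Classical in
/-- The number of triples of mutually disjoint set partitions of `ι` with `a`, `b` and `c` blocks.
These are the coefficients of the count of partial Latin rectangles in falling factorials. -/
noncomputable def numDisjointTriples (ι : Type*) [Fintype ι] (a b c : ℕ) : ℕ :=
  #{t : Setoid ι × Setoid ι × Setoid ι | MutuallyDisjoint t.1 t.2.1 t.2.2 ∧
    (numBlocks t.1, numBlocks t.2.1, numBlocks t.2.2) = (a, b, c)}

open Classical in
theorem sum_mutuallyDisjoint_eq_sum_numBlocks [Fintype ι] (F : ℕ × ℕ × ℕ → ℕ) :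
    ∑ t : Setoid ι × Setoid ι × Setoid ι with MutuallyDisjoint t.1 t.2.1 t.2.2,
        F (numBlocks t.1, numBlocks t.2.1, numBlocks t.2.2) =
      ∑ a ∈ range (Fintype.card ι + 1), ∑ b ∈ range (Fintype.card ι + 1),
        ∑ c ∈ range (Fintype.card ι + 1), numDisjointTriples ι a b c * F (a, b, c) := by
  have numBlocks_mem (P : Setoid ι) : numBlocks P ∈ range (Fintype.card ι + 1) :=
    mem_range_succ_iff.2 (numBlocks_le_card P)
  have numBlocks_mem_product (t : Setoid ι × Setoid ι × Setoid ι) :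
      (numBlocks t.1, numBlocks t.2.1, numBlocks t.2.2) ∈ range (Fintype.card ι + 1) ×ˢ
        range (Fintype.card ι + 1) ×ˢ range (Fintype.card ι + 1) :=
    mem_product.2 ⟨numBlocks_mem _, mem_product.2 ⟨numBlocks_mem _, numBlocks_mem _⟩⟩
  refine (sum_fiberwise_of_maps_to' (fun t _ => numBlocks_mem_product t) F).symm.trans ?_
  simp only [sum_product, sum_const, smul_eq_mul, filter_filter, numDisjointTriples]

end SetPartitions

section Entries

variable {ι X : Type*} [Fintype ι]

/-- A finset with as many elements as `ι` is enumerated by each injection of `ι` into it. -/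
def embeddingEquivEnumeration [DecidableEq X] {E : Finset X} (hE : #E = Fintype.card ι) :
    (ι ↪ E) ≃ {e : ι → X // Injective e ∧ univ.image e = E} where
  toFun g :=
    have inj : Injective fun i => (g i : X) := Subtype.val_injective.comp g.injective
    ⟨fun i => g i, inj, eq_of_subset_of_card_le (image_subset_iff.2 fun i _ => (g i).2) <| by
      rw [card_image_of_injective _ inj, hE, card_univ]⟩
  invFun e := ⟨fun i => ⟨e.1 i, e.2.2.subset (mem_image_of_mem e.1 (mem_univ i))⟩,
    fun _ _ h => e.2.1 (congrArg Subtype.val h)⟩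
  left_inv _ := rfl
  right_inv _ := rfl

open Classical in
theorem card_filter_injective_image [DecidableEq ι] [Fintype X] [DecidableEq X]
    (p : Finset X → Prop) :
    #{e : ι → X | Injective e ∧ p (univ.image e)} =
      (Fintype.card ι)! * #{E : Finset X | p E ∧ #E = Fintype.card ι} := by
  rw [card_eq_sum_card_fiberwise (f := fun e => univ.image e)
    (t := {E | p E ∧ #E = Fintype.card ι}) fun e he => ?_, mul_comm, ← smul_eq_mul, ← sum_const]
  · refine sum_congr rfl fun E hE => ?_
    obtain ⟨hpE, hE⟩ := (mem_filter.1 hE).2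
    have filter_eq :
        ({e ∈ {e : ι → X | Injective e ∧ p (univ.image e)} | univ.image e = E} : Finset _) =
          ({e | Injective e ∧ univ.image e = E} : Finset (ι → X)) := by
      ext e
      simp only [mem_filter, mem_univ, true_and]
      exact ⟨fun h => ⟨h.1.1, h.2⟩, fun h => ⟨⟨h.1, h.2 ▸ hpE⟩, h.2⟩⟩
    rw [filter_eq, ← Fintype.card_subtype, ← Fintype.card_congr (embeddingEquivEnumeration hE),
      Fintype.card_embedding_eq, Fintype.card_coe, hE, Nat.descFactorial_self]
  · obtain ⟨he, hp⟩ := (mem_filter.1 he).2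
    exact mem_filter.2 ⟨mem_univ _, hp, card_image_of_injective _ he⟩

variable {r s n : ℕ}

theorem injective_and_isPLR_image_iff {e : ι → Fin r × Fin s × Fin n} :
    Injective e ∧ IsPLR (univ.image e) ↔
      MutuallyDisjoint (ker fun i => (e i).1) (ker fun i => (e i).2.1)
        (ker fun i => (e i).2.2) := by
  simp only [MutuallyDisjoint, disjoint_ker_iff]
  constructor
  · rintro ⟨he, hE⟩
    have compatible (i j) (hij : i ≠ j) := hE (e i) (mem_image_of_mem e (mem_univ i)) (e j)
      (mem_image_of_mem e (mem_univ j)) (he.ne hij)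
    refine ⟨?_, ?_, ?_⟩ <;> intro i j h h' <;> by_contra hij
    exacts [(compatible i j hij).1 ⟨h, h'⟩, (compatible i j hij).2.1 ⟨h, h'⟩,
      (compatible i j hij).2.2 ⟨h, h'⟩]
  · rintro ⟨hrc, hrs, hcs⟩
    refine ⟨fun i j h => hrc i j (by rw [h]) (by rw [h]), ?_⟩
    simp only [IsPLR, mem_image, mem_univ, true_and, forall_exists_index,
      forall_apply_eq_imp_iff]
    exact fun i j hij => ⟨fun h => hij (congrArg e (hrc i j h.1 h.2)),
      fun h => hij (congrArg e (hrs i j h.1 h.2)), fun h => hij (congrArg e (hcs i j h.1 h.2))⟩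

open Classical in
theorem factorial_mul_numPLR_eq_card (r s n m : ℕ) :
    m ! * numPLR r s n m =
      #{p : (Fin m → Fin r) × (Fin m → Fin s) × (Fin m → Fin n) |
        MutuallyDisjoint (ker p.1) (ker p.2.1) (ker p.2.2)} := by
  have entries := card_filter_injective_image (ι := Fin m)
    (IsPLR : Finset (Fin r × Fin s × Fin n) → Prop)
  rw [Fintype.card_fin] at entries
  rw [numPLR, Nat.card_eq_fintype_card, Fintype.card_subtype, ← entries]
  refine card_nbij' (fun e => (fun i => (e i).1, fun i => (e i).2.1, fun i => (e i).2.2))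
    (fun p i => (p.1 i, p.2.1 i, p.2.2 i)) ?_ ?_ (fun _ _ => rfl) (fun _ _ => rfl) <;>
    simp [injective_and_isPLR_image_iff, Set.MapsTo]

theorem factorial_mul_numPLR (r s n m : ℕ) :
    m ! * numPLR r s n m = ∑ a ∈ range (m + 1), ∑ b ∈ range (m + 1), ∑ c ∈ range (m + 1),
      numDisjointTriples (Fin m) a b c *
        (r.descFactorial a * (s.descFactorial b * n.descFactorial c)) := by
  classical
  have by_blocks := sum_mutuallyDisjoint_eq_sum_numBlocks (ι := Fin m)
    fun k => r.descFactorial k.1 * (s.descFactorial k.2.1 * n.descFactorial k.2.2)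
  simp only [Fintype.card_fin] at by_blocks
  rw [factorial_mul_numPLR_eq_card, card_filter_mutuallyDisjoint_ker, ← by_blocks]
  simp only [Fintype.card_fin]

end Entries

section Enumeration

variable {m : ℕ}

/-- The set partitions of `Fin m` with `a` blocks, each encoded by the map sending every point to
the least point of its block. -/
def leastPointMaps (m a : ℕ) : Finset (Fin m → Fin m) :=
  {c ∈ Fintype.piFinset fun i => Iic i | (∀ i, c (c i) = c i) ∧ #(univ.image c) = a}

theorem mem_leastPointMaps {a : ℕ} {c : Fin m → Fin m} :
    c ∈ leastPointMaps m a ↔ (∀ i, c i ≤ i) ∧ (∀ i, c (c i) = c i) ∧ numBlocks (ker c) = a := by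
  simp only [leastPointMaps, mem_filter, Fintype.mem_piFinset, mem_Iic, numBlocks_ker]

theorem le_of_ker_eq_of_idempotent {κ : Type*} [LE κ] {c d : κ → κ} (hc : ∀ i, c (c i) = c i)
    (hd : ∀ i, d i ≤ i) (h : ker c = ker d) (i : κ) : d i ≤ c i := by
  have same_block : d (c i) = d i := ker_def.1 (h ▸ ker_def.2 (hc i))
  exact same_block ▸ hd (c i)

theorem ker_injOn_leastPointMaps (a : ℕ) :
    Set.InjOn ker (leastPointMaps m a : Set (Fin m → Fin m)) := by
  intro c hc d hd h
  obtain ⟨hc_le, hc_idem, -⟩ := mem_leastPointMaps.1 hc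
  obtain ⟨hd_le, hd_idem, -⟩ := mem_leastPointMaps.1 hd
  exact funext fun i => le_antisymm (le_of_ker_eq_of_idempotent hd_idem hc_le h.symm i)
    (le_of_ker_eq_of_idempotent hc_idem hd_le h i)

theorem exists_mem_leastPointMaps (P : Setoid (Fin m)) :
    ∃ c ∈ leastPointMaps m (numBlocks P), ker c = P := by
  classical
  have block_nonempty (i : Fin m) : ({j | P j i} : Finset (Fin m)).Nonempty :=
    ⟨i, mem_filter.2 ⟨mem_univ i, P.refl' i⟩⟩
  let c (i : Fin m) : Fin m := ({j | P j i} : Finset (Fin m)).min' (block_nonempty i)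
  have rel_c (i : Fin m) : P (c i) i := (mem_filter.1 (min'_mem _ (block_nonempty i))).2
  have c_eq {i j : Fin m} (h : P i j) : c i = c j := by
    have blocks_eq : ({k | P k i} : Finset (Fin m)) = ({k | P k j} : Finset (Fin m)) :=
      filter_congr fun k _ => ⟨fun hk => P.trans' hk h, fun hk => P.trans' hk (P.symm' h)⟩
    simp only [c, blocks_eq]
  have ker_c : ker c = P := Setoid.ext fun i j =>
    ⟨fun h => P.trans' (P.symm' (rel_c i)) (ker_def.1 h ▸ rel_c j), c_eq⟩
  have c_le (i : Fin m) : c i ≤ i :=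
    min'_le {j | P j i} i (mem_filter.2 ⟨mem_univ i, P.refl' i⟩)
  exact ⟨c, mem_leastPointMaps.2 ⟨c_le, fun i => c_eq (rel_c i), by rw [ker_c]⟩, ker_c⟩

-- Restricted to `Fin m`, where the bounded quantifiers evaluate much faster in the kernel than over
-- a general `Fintype`.
instance {α β : Type*} [DecidableEq α] [DecidableEq β] (f : Fin m → α) (g : Fin m → β) :
    Decidable (Disjoint (ker f) (ker g)) :=
  decidable_of_iff _ disjoint_ker_iff.symm

open Classical in
theorem numDisjointTriples_eq_card_leastPointMaps (a b c : ℕ) :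
    numDisjointTriples (Fin m) a b c =
      #{t ∈ leastPointMaps m a ×ˢ leastPointMaps m b ×ˢ leastPointMaps m c |
        MutuallyDisjoint (ker t.1) (ker t.2.1) (ker t.2.2)} := by
  symm
  refine card_nbij (Prod.map ker (Prod.map ker ker)) ?_ ?_ ?_
  · rintro ⟨f, g, h⟩ ht
    simp only [coe_filter, mem_product, mem_leastPointMaps, Set.mem_ofPred_eq] at ht
    simpa [numDisjointTriples] using ⟨ht.2, ht.1.1.2.2, ht.1.2.1.2.2, ht.1.2.2.2.2⟩
  · rintro ⟨f, g, h⟩ ht ⟨f', g', h'⟩ ht' heq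
    simp only [coe_filter, mem_product, Set.mem_ofPred_eq] at ht ht'
    simp only [Prod.map_apply, Prod.mk.injEq] at heq ⊢
    exact ⟨ker_injOn_leastPointMaps a ht.1.1 ht'.1.1 heq.1,
      ker_injOn_leastPointMaps b ht.1.2.1 ht'.1.2.1 heq.2.1,
      ker_injOn_leastPointMaps c ht.1.2.2 ht'.1.2.2 heq.2.2⟩
  · rintro ⟨P, Q, R⟩ ht
    simp only [coe_filter, mem_univ, true_and, Set.mem_ofPred_eq, Prod.mk.injEq] at ht
    obtain ⟨hdisj, rfl, rfl, rfl⟩ := ht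
    obtain ⟨f, hf, rfl⟩ := exists_mem_leastPointMaps P
    obtain ⟨g, hg, rfl⟩ := exists_mem_leastPointMaps Q
    obtain ⟨h, hh, rfl⟩ := exists_mem_leastPointMaps R
    exact ⟨(f, g, h), by simp [hf, hg, hh, hdisj], rfl⟩

-- The inner filter does not depend on `g`, so the kernel evaluates it only once for each `f`.
theorem numDisjointTriples_eq_sum (a b c : ℕ) :
    numDisjointTriples (Fin m) a b c =
      ∑ f ∈ leastPointMaps m a, ∑ g ∈ leastPointMaps m b with Disjoint (ker f) (ker g),
        #{h ∈ {h ∈ leastPointMaps m c | Disjoint (ker f) (ker h)} | Disjoint (ker g) (ker h)} := by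
  rw [numDisjointTriples_eq_card_leastPointMaps, card_filter, sum_product]
  refine sum_congr rfl fun f _ => ?_
  rw [sum_product, sum_filter]
  refine sum_congr rfl fun g _ => ?_
  by_cases hfg : Disjoint (ker f) (ker g) <;>
    simp [MutuallyDisjoint, hfg, filter_filter]

/-- The numbers of triples of mutually disjoint set partitions of a five-element set, indexed by
the numbers of blocks; an entry `0` in place of a vector stands for a zero vector or matrix. -/
def disjointTriplesTable : Fin 6 → Fin 6 → Fin 6 → ℕ :=
  ![0,
    ![0, 0, 0, 0, 0, ![0, 0, 0, 0, 0, 1]],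
    ![0, 0, 0, ![0, 0, 0, 180, 240, 60], ![0, 0, 0, 240, 360, 80], ![0, 0, 0, 60, 80, 15]],
    ![0, 0, ![0, 0, 0, 180, 240, 60], ![0, 0, 180, 1590, 1620, 300],
      ![0, 0, 240, 1620, 1260, 190], ![0, 0, 60, 300, 190, 25]],
    ![0, 0, ![0, 0, 0, 240, 360, 80], ![0, 0, 240, 1620, 1260, 190],
      ![0, 0, 360, 1260, 720, 90], ![0, 0, 80, 190, 90, 10]],
    ![0, ![0, 0, 0, 0, 0, 1], ![0, 0, 0, 60, 80, 15], ![0, 0, 60, 300, 190, 25],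
      ![0, 0, 80, 190, 90, 10], ![0, 1, 15, 25, 10, 1]]]

theorem numDisjointTriples_fin_five (a b c : Fin 6) :
    numDisjointTriples (Fin 5) a b c = disjointTriplesTable a b c := by
  rw [numDisjointTriples_eq_sum]
  revert a b c
  decide +kernel

end Enumeration

theorem stmt7 (r s n : ℕ) (hr : 0 < r) (hs : 0 < s) (hn : 0 < n) :
    (120 : ℤ) * numPLR r s n 5 =
      (r : ℤ) * s * n *
        (sig r s n 4 4 4 - 10 * sig r s n 4 3 3 + 20 * sig r s n 3 3 3
          + 35 * sig r s n 4 2 2 + 90 * sig r s n 3 3 2 - 180 * sig r s n 3 2 2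
          - 50 * sig r s n 4 1 1 - 260 * sig r s n 3 2 1 - 460 * sig r s n 2 2 2
          + 520 * sig r s n 3 1 1 + 1350 * sig r s n 2 2 1 + 24 * sig r s n 4 0 0
          + 240 * sig r s n 3 1 0 + 480 * sig r s n 2 2 0 - 320 * sig r s n 2 1 1
          - 480 * sig r s n 3 0 0 - 2520 * sig r s n 2 1 0 - 5090 * sig r s n 1 1 1
          + 2880 * sig r s n 2 0 0 + 7440 * sig r s n 1 1 0 - 6360 * sig r s n 1 0 0
          + 4512) := by
  have expansion : (120 : ℤ) * numPLR r s n 5 =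
      ∑ a : Fin 6, ∑ b : Fin 6, ∑ c : Fin 6, (disjointTriplesTable a b c : ℤ) *
        ((descPochhammer ℤ a).eval (r : ℤ) * ((descPochhammer ℤ b).eval (s : ℤ) *
          (descPochhammer ℤ c).eval (n : ℤ))) := by
    have by_blocks := factorial_mul_numPLR r s n 5
    simp only [sum_range (n := 5 + 1), numDisjointTriples_fin_five] at by_blocks
    simp only [descPochhammer_eval_eq_descFactorial]
    exact_mod_cast by_blocks
  rw [expansion]
  simp [Fin.sum_univ_six, disjointTriplesTable, descPochhammer_succ_eval, sig]
  ring
end
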